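/- Let c₁, c₂ be negative rational numbers and let 𝓑 = ℍ[ℚ, c₁, c₂] be the corresponding (definite) quaternion algebra over ℚ, with conjugation star, reduced trace Tr(q) = q + star q and reduced norm N(q) = q · star q (both scalars, identified with rationals). Let x, β, c, d ∈ 𝓑 and let α, γ, n be positive integers such that: star x = −x, star β = −β, star d = −d, n = α·γ − N(β), and n·γ = −(α·c + β·d) in 𝓑. Define B ∈ ℚ by B = −(1/2)·(Tr(x²) − 4α + (2/n)·Tr(c) + (1/n²)·Tr(d²)). Then B = N(x) + 2α + γ/α + n/α² + N(β/α + (star d)/n). Consequently, N(x) ≤ B, 2α ≤ B, γ/α ≤ B, N(β) ≤ α²·B, N(d) ≤ 2B·n², n ≤ (1/4)·B³ and N(d) ≤ (1/8)·B⁷. -/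

import Mathlib

open Quaternion

/-- The reduced trace of a quaternion `q`, i.e. the scalar `q + star q`
identified with a rational number. -/
def quatTr {c₁ c₂ : ℚ} (q : ℍ[ℚ, c₁, c₂]) : ℚ := (q + star q).re

/-- The reduced norm of a quaternion `q`, i.e. the scalar `q * star q`
identified with a rational number. -/
def quatN {c₁ c₂ : ℚ} (q : ℍ[ℚ, c₁, c₂]) : ℚ := (q * star q).re

/-!
The reduced norm `N` is a quadratic form whose polar form at `(p, star q)` is `Tr(pq)`. Taking
traces in `nγ = -(αc + βd)` expresses `Tr(c)` through `Tr(βd)`, which is also the cross term of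
`N(β/α + star d/n)`; completing the square in this way turns `B` into a sum of nonnegative terms.
Each of `N(x)`, `2α` and `γ/α` is then at most `B`. For `d`, write `star d/n` as the difference of
`β/α + star d/n` and `β/α` and use `N(u - v) ≤ 2(N(u) + N(v))`.
-/

theorem quadraticForm_sub_le_two_mul_add {R M : Type*} [CommRing R] [PartialOrder R]
    [IsOrderedAddMonoid R] [AddCommGroup M] [Module R M] (Q : QuadraticForm R M)
    (hQ : ∀ v, 0 ≤ Q v) (u v : M) : Q (u - v) ≤ 2 * (Q u + Q v) := by
  have parallelogram : Q (u + v) + Q (u - v) = 2 * (Q u + Q v) := by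
    rw [sub_eq_add_neg, QuadraticMap.map_add Q u v, QuadraticMap.map_add Q u (-v),
      QuadraticMap.polar_neg_right, Q.map_neg]
    ring
  exact parallelogram ▸ le_add_of_nonneg_left (hQ (u + v))

theorem quadraticForm_le_of_add_inv_smul {K M : Type*} [Field K] [LinearOrder K]
    [IsStrictOrderedRing K] [AddCommGroup M] [Module K M] (Q : QuadraticForm K M)
    (hQ : ∀ v, 0 ≤ Q v) {r C : K} (hr : r ≠ 0) {v w : M} (hC : Q (v + r⁻¹ • w) + Q v ≤ C) :
    Q w ≤ 2 * C * r ^ 2 := by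
  have hw : Q w = Q (v + r⁻¹ • w - v) * r ^ 2 := by
    rw [add_sub_cancel_left, QuadraticMap.map_smul, smul_eq_mul]
    field_simp
  calc Q w = Q (v + r⁻¹ • w - v) * r ^ 2 := hw
    _ ≤ 2 * (Q (v + r⁻¹ • w) + Q v) * r ^ 2 := by
      gcongr
      exact quadraticForm_sub_le_two_mul_add Q hQ _ _
    _ ≤ 2 * C * r ^ 2 := by gcongr

section CommRing

variable {R : Type*} [CommRing R] {a b c : R}

/-- The reduced trace `q + star q` of a quaternion algebra over a commutative ring, as a linear
form. The scalar `q + star q` is read off from its real part. -/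
def reducedTrace : ℍ[R,a,b,c] →ₗ[R] R where
  toFun q := (q + star q).re
  map_add' p q := by simp only [star_add, QuaternionAlgebra.re_add]; ring
  map_smul' r q := by simp [mul_add]

/-- The reduced norm `q * star q` of a quaternion algebra over a commutative ring, as a quadratic
form. The scalar `q * star q` is read off from its real part. -/
def reducedNorm : QuadraticForm R ℍ[R,a,b,c] :=
  LinearMap.BilinMap.toQuadraticMap <| LinearMap.mk₂ R (fun p q : ℍ[R,a,b,c] ↦ (p * star q).re)
    (fun _ _ _ ↦ by rw [add_mul, QuaternionAlgebra.re_add])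
    (fun _ _ _ ↦ by rw [smul_mul_assoc, QuaternionAlgebra.re_smul])
    (fun _ _ _ ↦ by rw [star_add, mul_add, QuaternionAlgebra.re_add])
    (fun _ _ _ ↦ by
      rw [QuaternionAlgebra.star_smul, mul_smul_comm, QuaternionAlgebra.re_smul])

theorem reducedTrace_apply (q : ℍ[R,a,b,c]) : reducedTrace q = (q + star q).re := rfl

theorem reducedNorm_apply (q : ℍ[R,a,b,c]) : reducedNorm q = (q * star q).re := rfl

theorem reducedTrace_algebraMap (r : R) :
    reducedTrace (algebraMap R ℍ[R,a,b,c] r) = 2 * r := by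
  simp [reducedTrace_apply, two_mul]

theorem reducedNorm_star (q : ℍ[R,a,b,c]) : reducedNorm (star q) = reducedNorm q := by
  rw [reducedNorm_apply, reducedNorm_apply, star_star, star_comm_self']

theorem polar_reducedNorm_star_right (p q : ℍ[R,a,b,c]) :
    QuadraticMap.polar reducedNorm p (star q) = reducedTrace (p * q) := by
  simp only [QuadraticMap.polar, reducedNorm_apply, reducedTrace_apply, ← QuaternionAlgebra.re_sub,
    star_add, star_mul, star_star]
  congr 1
  noncomm_ring

theorem reducedNorm_smul_add_smul_star (r s : R) (p q : ℍ[R,a,b,c]) :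
    reducedNorm (r • p + s • star q) =
      r ^ 2 * reducedNorm p + s ^ 2 * reducedNorm q + r * s * reducedTrace (p * q) := by
  rw [QuadraticMap.map_add reducedNorm, QuadraticMap.map_smul, QuadraticMap.map_smul,
    reducedNorm_star, QuadraticMap.polar_smul_left, QuadraticMap.polar_smul_right,
    polar_reducedNorm_star_right]
  simp only [smul_eq_mul]
  ring

theorem reducedTrace_sq_of_star_eq_neg {q : ℍ[R,a,b,c]} (hq : star q = -q) :
    reducedTrace (q ^ 2) = -2 * reducedNorm q := by
  rw [reducedTrace_apply, reducedNorm_apply, star_pow, hq, neg_sq, mul_neg, ← sq,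
    QuaternionAlgebra.re_add, QuaternionAlgebra.re_neg]
  ring

theorem mul_reducedTrace_of_algebraMap_eq {r s : R} {p q t : ℍ[R,a,b,c]}
    (h : algebraMap R ℍ[R,a,b,c] r = -(algebraMap R ℍ[R,a,b,c] s * t + p * q)) :
    s * reducedTrace t = -(2 * r + reducedTrace (p * q)) := by
  have htrace := congrArg reducedTrace h
  rw [← Algebra.smul_def, map_neg, map_add, map_smul, reducedTrace_algebraMap, smul_eq_mul]
    at htrace
  linear_combination htrace

end CommRing

-- `b ^ 2 + 4 * a` is the discriminant of the defining relation `i ^ 2 = a + b * i`.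
theorem reducedNorm_nonneg {K : Type*} [CommRing K] [LinearOrder K] [IsStrictOrderedRing K]
    {a b c : K} (hab : b ^ 2 + 4 * a ≤ 0) (hc : c ≤ 0) (q : ℍ[K,a,b,c]) :
    0 ≤ reducedNorm q := by
  have binary_nonneg (s t : K) : 0 ≤ s ^ 2 + b * s * t - a * t ^ 2 := by
    have complete_square : 4 * (s ^ 2 + b * s * t - a * t ^ 2) =
        (2 * s + b * t) ^ 2 + -(b ^ 2 + 4 * a) * t ^ 2 := by ring
    refine nonneg_of_mul_nonneg_right ?_ (zero_lt_four (α := K))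
    rw [complete_square]
    exact add_nonneg (sq_nonneg _) (mul_nonneg (neg_nonneg.2 hab) (sq_nonneg t))
  have norm_eq : reducedNorm q = (q.re ^ 2 + b * q.re * q.imI - a * q.imI ^ 2) +
      -c * (q.imJ ^ 2 + b * q.imJ * q.imK - a * q.imK ^ 2) := by
    simp only [reducedNorm_apply, QuaternionAlgebra.re_mul, QuaternionAlgebra.re_star,
      QuaternionAlgebra.imI_star, QuaternionAlgebra.imJ_star, QuaternionAlgebra.imK_star]
    ring
  rw [norm_eq]
  exact add_nonneg (binary_nonneg _ _) (mul_nonneg (neg_nonneg.2 hc) (binary_nonneg _ _))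

theorem neg_half_trace_eq_sum_reducedNorm {K : Type*} [Field K] [NeZero (2 : K)] {c₁ c₂ c₃ : K}
    {x β c d : ℍ[K,c₁,c₂,c₃]} {α γ n : K} (hα : α ≠ 0) (hn : n ≠ 0)
    (hx : star x = -x) (hd : star d = -d) (hnval : n = α * γ - reducedNorm β)
    (hrel : algebraMap K ℍ[K,c₁,c₂,c₃] (n * γ) =
      -(algebraMap K ℍ[K,c₁,c₂,c₃] α * c + β * d)) :
    -(1 / 2) * (reducedTrace (x ^ 2) - 4 * α + 2 / n * reducedTrace c +
        1 / n ^ 2 * reducedTrace (d ^ 2)) =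
      reducedNorm x + 2 * α + γ / α + n / α ^ 2 + reducedNorm (α⁻¹ • β + n⁻¹ • star d) := by
  have htrace : reducedTrace c = -(2 * (n * γ) + reducedTrace (β * d)) / α :=
    eq_div_of_mul_eq hα ((mul_comm _ _).trans (mul_reducedTrace_of_algebraMap_eq hrel))
  have hβ : reducedNorm β = α * γ - n := by linear_combination hnval
  rw [reducedTrace_sq_of_star_eq_neg hx, reducedTrace_sq_of_star_eq_neg hd, htrace,
    reducedNorm_smul_add_smul_star, hβ]
  field_simp
  ring

theorem stmt_12_general {K : Type*} [Field K] [LinearOrder K] [IsStrictOrderedRing K]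
    {c₁ c₂ c₃ : K} (hc₁₂ : c₂ ^ 2 + 4 * c₁ ≤ 0) (hc₃ : c₃ ≤ 0)
    {x β c d : ℍ[K,c₁,c₂,c₃]} {α γ n : K} (hα : 0 < α) (hn : 0 < n)
    (hx : star x = -x) (hd : star d = -d) (hnval : n = α * γ - reducedNorm β)
    (hrel : algebraMap K ℍ[K,c₁,c₂,c₃] (n * γ) =
      -(algebraMap K ℍ[K,c₁,c₂,c₃] α * c + β * d))
    {B : K}
    (hB : B = -(1 / 2) * (reducedTrace (x ^ 2) - 4 * α + 2 / n * reducedTrace c +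
      1 / n ^ 2 * reducedTrace (d ^ 2))) :
    B = reducedNorm x + 2 * α + γ / α + n / α ^ 2 + reducedNorm (α⁻¹ • β + n⁻¹ • star d) ∧
      reducedNorm x ≤ B ∧
      2 * α ≤ B ∧
      γ / α ≤ B ∧
      reducedNorm β ≤ α ^ 2 * B ∧
      reducedNorm d ≤ 2 * B * n ^ 2 ∧
      n ≤ 1 / 4 * B ^ 3 ∧
      reducedNorm d ≤ 1 / 8 * B ^ 7 := by
  have norm_nonneg := reducedNorm_nonneg hc₁₂ hc₃
  have hsum := hB.trans (neg_half_trace_eq_sum_reducedNorm hα.ne' hn.ne' hx hd hnval hrel)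
  have hNx := norm_nonneg x
  have hNβ := norm_nonneg β
  have hNu := norm_nonneg (α⁻¹ • β + n⁻¹ • star d)
  have hn_div : 0 < n / α ^ 2 := by positivity
  have hNβ_div : reducedNorm (α⁻¹ • β) = γ / α - n / α ^ 2 := by
    rw [QuadraticMap.map_smul, smul_eq_mul, show reducedNorm β = α * γ - n by linarith]
    field_simp
  have hγ_div : 0 < γ / α := by linarith [norm_nonneg (α⁻¹ • β)]
  have hαB : 2 * α ≤ B := by linarith
  have hγB : γ / α ≤ B := by linarith
  have hB_nonneg : 0 ≤ B := by linarith
  have hαγ : α * γ ≤ α ^ 2 * B :=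
    calc α * γ = α ^ 2 * (γ / α) := by field_simp
      _ ≤ α ^ 2 * B := by gcongr
  have hnB : n ≤ 1 / 4 * B ^ 3 :=
    calc n ≤ α ^ 2 * B := by linarith
      _ ≤ (B / 2) ^ 2 * B := by gcongr; linarith
      _ = 1 / 4 * B ^ 3 := by ring
  have hdB : reducedNorm d ≤ 2 * B * n ^ 2 :=
    reducedNorm_star d ▸ quadraticForm_le_of_add_inv_smul reducedNorm norm_nonneg hn.ne'
      (v := α⁻¹ • β) (by linarith)
  refine ⟨hsum, by linarith, hαB, hγB, by linarith, hdB, hnB, ?_⟩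
  calc reducedNorm d ≤ 2 * B * n ^ 2 := hdB
    _ ≤ 2 * B * (1 / 4 * B ^ 3) ^ 2 := by gcongr
    _ = 1 / 8 * B ^ 7 := by ring

/-- the computation of Section 4: equation `eq:trace` and the bounds
following it. In a definite quaternion algebra `𝓑 = ℍ[ℚ, c₁, c₂]` (`c₁, c₂ < 0`), given
`x, β, c, d ∈ 𝓑` and positive integers `α, γ, n` with `star x = -x`, `star β = -β`,
`star d = -d`, `n = αγ - N(β)` and `nγ = -(αc + βd)`, the quantity
`B = -(1/2)·(Tr(x²) - 4α + (2/n)·Tr(c) + (1/n²)·Tr(d²))` satisfies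
`B = N(x) + 2α + γ/α + n/α² + N(β/α + d^∨/n)`, and consequently
`N(x) ≤ B`, `2α ≤ B`, `γ/α ≤ B`, `N(β) ≤ α²B`, `N(d) ≤ 2Bn²`, `n ≤ B³/4`,
`N(d) ≤ B⁷/8`. -/
theorem stmt_12 (c₁ c₂ : ℚ) (hc₁ : c₁ < 0) (hc₂ : c₂ < 0)
    (x β c d : ℍ[ℚ, c₁, c₂]) (α γ n : ℤ)
    (hα : 0 < α) (hγ : 0 < γ) (hn : 0 < n)
    (hx : star x = -x) (hβ : star β = -β) (hd : star d = -d)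
    (hnval : (n : ℚ) = (α : ℚ) * (γ : ℚ) - quatN β)
    (hrel : (algebraMap ℚ ℍ[ℚ, c₁, c₂]) ((n : ℚ) * (γ : ℚ)) =
      -((algebraMap ℚ ℍ[ℚ, c₁, c₂]) (α : ℚ) * c + β * d))
    (B : ℚ)
    (hB : B = -(1/2) * (quatTr (x ^ 2) - 4 * (α : ℚ) + (2 / (n : ℚ)) * quatTr c +
      (1 / (n : ℚ) ^ 2) * quatTr (d ^ 2))) :
    B = quatN x + 2 * (α : ℚ) + (γ : ℚ) / (α : ℚ) + (n : ℚ) / (α : ℚ) ^ 2 +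
        quatN (((α : ℚ)⁻¹) • β + ((n : ℚ)⁻¹) • star d) ∧
      quatN x ≤ B ∧
      2 * (α : ℚ) ≤ B ∧
      (γ : ℚ) / (α : ℚ) ≤ B ∧
      quatN β ≤ (α : ℚ) ^ 2 * B ∧
      quatN d ≤ 2 * B * (n : ℚ) ^ 2 ∧
      (n : ℚ) ≤ (1/4) * B ^ 3 ∧
      quatN d ≤ (1/8) * B ^ 7 :=
  stmt_12_general (by linarith) hc₂.le (Int.cast_pos.2 hα) (Int.cast_pos.2 hn) hx hd hnval
    hrel hB
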